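/- arXiv:1805.08955 — 4 statements merged into one kernel-verified Lean document; each statement's English description precedes it below -/
import Mathlib

section
/- Let B be a D-left-regular bipartite graph with K left vertices and F right vertices, where D ≥ 1 and every right vertex has at least one neighbor. Then the line graph L = L(B) has KD vertices and satisfies: (C1) V(L) is partitioned into K pairwise disjoint cliques U_1, …, U_K of size D each (the clique U_k consisting of the edges of B incident to the k-th left vertex); (C2) for distinct k1, k2, every vertex of U_{k1} is adjacent in L to at most one vertex of U_{k2}; (C3) for every k and every vertex e ∈ U_k, the set {e} ∪ (N(e) \ U_k) is a clique of L (where N(e) is the neighborhood of e in L), and these sets (the subfile-cliques S_1, …, S_r) partition V(L); (C4) the number of right vertices satisfies F = KD − Σ_{i=1}^{r}(|S_i| − 1). -/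
open SimpleGraph

theorem fiber_sum_aux {α β : Type*} [Finite α] [Fintype β] (f : α → β) :
    ∑ b, {a | f a = b}.ncard = Nat.card α := by
  classical
  haveI := Fintype.ofFinite α
  rw [Nat.card_eq_fintype_card, ← Finset.card_univ,
    Finset.card_eq_sum_card_fiberwise (f := f) (t := Finset.univ) (by simp)]
  refine Finset.sum_congr rfl fun b _ => ?_
  rw [← Set.ncard_coe_finset]
  simp

/-- properties (C1)-(C4) of the line graph of a `D`-left-regular bipartite graph
with `K` left vertices and `F` right vertices (every right vertex having at least one
neighbor). -/
theorem lineGraph_of_bipartite_caching_graph (K D F : ℕ) (hD : 1 ≤ D)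
    (B : SimpleGraph (Fin K ⊕ Fin F))
    (hbipL : ∀ a b : Fin K, ¬ B.Adj (Sum.inl a) (Sum.inl b))
    (hbipR : ∀ a b : Fin F, ¬ B.Adj (Sum.inr a) (Sum.inr b))
    (hreg : ∀ k : Fin K, (B.neighborSet (Sum.inl k)).ncard = D)
    (hright : ∀ f : Fin F, (B.neighborSet (Sum.inr f)).Nonempty)
    (U : Fin K → Set B.edgeSet)
    (hU : ∀ k : Fin K, U k = {e : B.edgeSet | (Sum.inl k : Fin K ⊕ Fin F) ∈ (e : Sym2 (Fin K ⊕ Fin F))}) :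
    -- the line graph has K*D vertices
    B.edgeSet.ncard = K * D ∧
    -- (C1) : the U k are disjoint cliques of size D covering the vertex set of the line graph
    ((∀ k : Fin K, B.lineGraph.IsClique (U k)) ∧
     (∀ k : Fin K, (U k).ncard = D) ∧
     (∀ k₁ k₂ : Fin K, k₁ ≠ k₂ → Disjoint (U k₁) (U k₂)) ∧
     (⋃ k : Fin K, U k) = Set.univ) ∧
    -- (C2) : a vertex of U k₁ is adjacent to at most one vertex of U k₂
    (∀ k₁ k₂ : Fin K, k₁ ≠ k₂ → ∀ e ∈ U k₁,
      {f : B.edgeSet | f ∈ U k₂ ∧ B.lineGraph.Adj e f}.Subsingleton) ∧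
    -- (C3) : the subfile-cliques are cliques and partition the vertex set
    (∀ k : Fin K, ∀ e ∈ U k,
      B.lineGraph.IsClique (insert e (B.lineGraph.neighborSet e \ U k))) ∧
    (∃ 𝒮 : Finset (Set B.edgeSet),
      (↑𝒮 : Set (Set B.edgeSet)) =
        {s : Set B.edgeSet | ∃ k : Fin K, ∃ e ∈ U k,
          s = insert e (B.lineGraph.neighborSet e \ U k)} ∧
      ((𝒮 : Set (Set B.edgeSet)).Pairwise fun s₁ s₂ => Disjoint s₁ s₂) ∧
      (⋃ s ∈ 𝒮, s) = Set.univ ∧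
      -- (C4) : F = K*D - ∑ (|Sᵢ| - 1)
      F + ∑ s ∈ 𝒮, (s.ncard - 1) = K * D) := by
  classical
  have hex : ∀ e : B.edgeSet, ∃ p : Fin K × Fin F,
      (e : Sym2 (Fin K ⊕ Fin F)) = s(Sum.inl p.1, Sum.inr p.2) := by
    rintro ⟨e, he⟩
    induction e using Sym2.ind with
    | _ x y =>
      rcases x with a | a <;> rcases y with b | b
      · exact absurd he (hbipL a b)
      · exact ⟨(a, b), rfl⟩
      · exact ⟨(b, a), Sym2.eq_swap⟩
      · exact absurd he (hbipR a b)
  choose p hp using hex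
  obtain ⟨l, hl⟩ : ∃ l : B.edgeSet → Fin K, ∀ e, l e = (p e).1 := ⟨_, fun _ => rfl⟩
  obtain ⟨r, hr⟩ : ∃ r : B.edgeSet → Fin F, ∀ e, r e = (p e).2 := ⟨_, fun _ => rfl⟩
  have he : ∀ e : B.edgeSet, (e : Sym2 (Fin K ⊕ Fin F)) = s(Sum.inl (l e), Sum.inr (r e)) := by
    intro e; rw [hl, hr]; exact hp e
  have hext : ∀ e e' : B.edgeSet, l e = l e' → r e = r e' → e = e' := by
    intro e e' h1 h2
    apply Subtype.ext
    rw [he e, he e', h1, h2]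
  have hmk : ∀ (k : Fin K) (f : Fin F), B.Adj (Sum.inl k) (Sum.inr f) →
      ∃ e : B.edgeSet, l e = k ∧ r e = f := by
    intro k f h
    refine ⟨⟨s(Sum.inl k, Sum.inr f), h⟩, ?_⟩
    have := he ⟨s(Sum.inl k, Sum.inr f), h⟩
    simp only [Sym2.eq_iff] at this
    simp only [Sum.inl.injEq, Sum.inr.injEq, reduceCtorEq, and_false, or_false] at this
    exact ⟨this.1.symm, this.2.symm⟩
  have hadj : ∀ e e' : B.edgeSet, B.lineGraph.Adj e e' ↔ e ≠ e' ∧ (l e = l e' ∨ r e = r e') := by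
    intro e e'
    rw [lineGraph_adj_iff_exists, he e, he e']
    simp
  have hadjB : ∀ e, B.Adj (Sum.inl (l e)) (Sum.inr (r e)) := by
    intro e
    have := e.2
    rw [he e] at this
    exact this
  have hU' : ∀ k, U k = {e | l e = k} := by
    intro k
    rw [hU]
    ext e
    simp only [Set.mem_setOf_eq]
    rw [he e]
    simp [eq_comm]
  have hrs : ∀ f, ∃ e, r e = f := by
    intro f
    obtain ⟨x, hx⟩ := hright f
    rcases x with k | g
    · obtain ⟨e, _, h⟩ := hmk k f hx.symm
      exact ⟨e, h⟩
    · exact absurd hx (hbipR f g)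
  have hUc : ∀ k, (U k).ncard = D := by
    intro k
    rw [← hreg k, hU']
    have : B.neighborSet (Sum.inl k) = (fun e => (Sum.inr (r e) : Fin K ⊕ Fin F)) '' {e | l e = k} := by
      ext x
      constructor
      · intro hx
        rcases x with a | f
        · exact absurd hx (hbipL k a)
        · obtain ⟨e, h1, h2⟩ := hmk k f hx
          exact ⟨e, h1, by simp [h2]⟩
      · rintro ⟨e, rfl, rfl⟩
        exact hadjB e
    rw [this, Set.ncard_image_of_injOn]
    intro e h e' h' hee
    simp only [Set.mem_setOf_eq, Sum.inr.injEq] at h h' hee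
    exact hext e e' (h.trans h'.symm) hee
  have hcard : Nat.card B.edgeSet = K * D := by
    rw [← fiber_sum_aux l]
    simp_rw [← hU', hUc]
    simp
  have hS : ∀ k, ∀ e ∈ U k, insert e (B.lineGraph.neighborSet e \ U k) = {e' | r e' = r e} := by
    intro k e hek
    rw [hU'] at *
    simp only [Set.mem_setOf_eq] at hek
    subst hek
    ext e'
    simp only [Set.mem_insert_iff, Set.mem_diff, mem_neighborSet, hadj, Set.mem_setOf_eq]
    constructor
    · rintro (rfl | ⟨⟨_, h | h⟩, h'⟩)
      · rfl
      · exact absurd h.symm h'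
      · exact h.symm
    · intro h
      by_cases hee : e' = e
      · exact Or.inl hee
      · exact Or.inr ⟨⟨fun h' => hee h'.symm, Or.inr h.symm⟩, fun h' => hee (hext _ _ h' h)⟩
  have hSinj : Function.Injective (fun f : Fin F => {e | r e = f}) := by
    intro f g h
    obtain ⟨e, rfl⟩ := hrs f
    have : e ∈ {e' | r e' = r e} := rfl
    simp only at h
    rw [h] at this
    exact this
  refine ⟨hcard, ⟨?_, hUc, ?_, ?_⟩, ?_, ?_, ?_⟩
  · intro k e h e' h' hne
    rw [hU'] at h h'
    exact (hadj e e').2 ⟨hne, Or.inl (Eq.trans h (Eq.symm h'))⟩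
  · intro k₁ k₂ hne
    rw [Set.disjoint_left]
    intro e h h'
    rw [hU'] at h h'
    exact hne (Eq.trans (Eq.symm h) h')
  · ext e
    simp [hU']
  · intro k₁ k₂ hne e h f hf g hg
    simp only [hU', Set.mem_setOf_eq, hadj] at h hf hg
    obtain ⟨hf1, _, hf2⟩ := hf
    obtain ⟨hg1, _, hg2⟩ := hg
    subst h
    have a := hf2.resolve_left (fun h => hne (h.trans hf1))
    have b := hg2.resolve_left (fun h => hne (h.trans hg1))
    exact hext _ _ (hf1.trans hg1.symm) (a.symm.trans b)
  · intro k e h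
    rw [hS k e h]
    intro a ha b hb hne
    exact (hadj a b).2 ⟨hne, Or.inr (Eq.trans ha (Eq.symm hb))⟩
  · refine ⟨Finset.univ.image (fun f : Fin F => {e | r e = f}), ?_, ?_, ?_, ?_⟩
    · ext s
      simp only [Finset.coe_image, Finset.coe_univ, Set.image_univ, Set.mem_range, Set.mem_setOf_eq]
      constructor
      · rintro ⟨f, rfl⟩
        obtain ⟨e, rfl⟩ := hrs f
        have hm : e ∈ U (l e) := by rw [hU']; rfl
        exact ⟨l e, e, hm, (hS _ _ hm).symm⟩
      · rintro ⟨k, e, hm, rfl⟩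
        exact ⟨r e, (hS _ _ hm).symm⟩
    · intro s hs t ht hne
      simp only [Finset.coe_image, Finset.coe_univ, Set.image_univ, Set.mem_range] at hs ht
      obtain ⟨f, rfl⟩ := hs
      obtain ⟨g, rfl⟩ := ht
      rw [Set.disjoint_left]
      intro e h h'
      simp only [Set.mem_setOf_eq] at h h'
      subst h
      subst h'
      exact hne rfl
    · ext e
      simp
    · rw [Finset.sum_image (fun a _ b _ h => hSinj h), ← hcard, ← fiber_sum_aux r]
      have hF : F = ∑ f : Fin F, 1 := by simp
      refine (congrArg (· + _) hF).trans ?_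
      beta_reduce
      rw [← Finset.sum_add_distrib]
      refine Finset.sum_congr rfl fun f _ => ?_
      have : 0 < {e | r e = f}.ncard := (Set.ncard_pos (Set.toFinite _)).2 (hrs f)
      omega
end

section
/- Let K, D ≥ 1 and let L be a graph on KD vertices satisfying: (C1) V(L) is partitioned into K pairwise disjoint cliques U_1, …, U_K (user-cliques) of size D each; (C2) for distinct k1, k2, every vertex of U_{k1} is adjacent in L to at most one vertex of U_{k2}; (C3) for every k and every vertex e ∈ U_k, the set {e} ∪ (N(e) \ U_k) is a clique of L. Let S_1, …, S_r denote the subfile-cliques of L, i.e., the distinct sets of the form {e} ∪ (N(e) \ U_k) for e ∈ U_k (under (C1)–(C3) these partition V(L)). Then L is isomorphic to the line graph of a D-left-regular bipartite graph B with K left vertices and exactly F = KD − Σ_{i=1}^{r}(|S_i| − 1) right vertices, each right vertex having at least one neighbor. -/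
open SimpleGraph

theorem aux_build {W α β : Type*} (L : SimpleGraph W) (u : W → α) (c : W → β)
    (hc : Function.Surjective c)
    (hinj : ∀ e f, u e = u f → c e = c f → e = f)
    (hadj : ∀ e f, L.Adj e f ↔ e ≠ f ∧ (u e = u f ∨ c e = c f)) (D : ℕ)
    (hu : ∀ k, {e | u e = k}.ncard = D) :
    ∃ B : SimpleGraph (α ⊕ β),
      (∀ a b : α, ¬ B.Adj (Sum.inl a) (Sum.inl b)) ∧
      (∀ a b : β, ¬ B.Adj (Sum.inr a) (Sum.inr b)) ∧
      (∀ k : α, (B.neighborSet (Sum.inl k)).ncard = D) ∧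
      (∀ f : β, (B.neighborSet (Sum.inr f)).Nonempty) ∧
      Nonempty (L ≃g B.lineGraph) := by
  let B : SimpleGraph (α ⊕ β) :=
    { Adj := fun x y => ∃ e, (x = Sum.inl (u e) ∧ y = Sum.inr (c e)) ∨
        (x = Sum.inr (c e) ∧ y = Sum.inl (u e))
      symm := ⟨by
        rintro x y ⟨e, h⟩
        exact ⟨e, by tauto⟩⟩
      loopless := ⟨by
        rintro x ⟨e, ⟨h1, h2⟩ | ⟨h1, h2⟩⟩ <;> simp [h1] at h2⟩ }
  have hB : ∀ x y, B.Adj x y ↔ ∃ e, (x = Sum.inl (u e) ∧ y = Sum.inr (c e)) ∨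
        (x = Sum.inr (c e) ∧ y = Sum.inl (u e)) := fun _ _ => Iff.rfl
  refine ⟨B, ?_, ?_, ?_, ?_, ?_⟩
  · intro a b; simp [hB]
  · intro a b; simp [hB]
  · intro k
    have : B.neighborSet (Sum.inl k) = (fun e => Sum.inr (c e)) '' {e | u e = k} := by
      ext y
      simp only [mem_neighborSet, hB, Set.mem_image, Set.mem_setOf_eq]
      constructor
      · rintro ⟨e, ⟨h1, h2⟩ | ⟨h1, h2⟩⟩
        · exact ⟨e, (Sum.inl.inj h1).symm, h2.symm⟩
        · cases h1
      · rintro ⟨e, rfl, rfl⟩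
        exact ⟨e, Or.inl ⟨rfl, rfl⟩⟩
    rw [this, Set.ncard_image_of_injOn, hu]
    intro e he f hf h
    exact hinj e f (he.trans hf.symm) (Sum.inr.inj h)
  · intro f
    obtain ⟨e, rfl⟩ := hc f
    exact ⟨Sum.inl (u e), e, Or.inr ⟨rfl, rfl⟩⟩
  · let φ : W → B.edgeSet := fun e => ⟨s(Sum.inl (u e), Sum.inr (c e)), e, Or.inl ⟨rfl, rfl⟩⟩
    have hφi : Function.Injective φ := by
      intro e f h
      have h := congrArg Subtype.val h
      simp [φ] at h
      exact hinj e f h.1 h.2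
    have hφs : Function.Surjective φ := by
      rintro ⟨x, hx⟩
      induction x using Sym2.ind with
      | _ x y =>
        obtain ⟨e, ⟨h1, h2⟩ | ⟨h1, h2⟩⟩ := (hB x y).1 hx
        · exact ⟨e, Subtype.ext (by subst h1 h2; rfl)⟩
        · exact ⟨e, Subtype.ext (by subst h1 h2; exact Sym2.eq_swap)⟩
    have hφb : Function.Bijective φ := ⟨hφi, hφs⟩
    refine ⟨⟨Equiv.ofBijective φ hφb, ?_⟩⟩
    intro e f
    change B.lineGraph.Adj (φ e) (φ f) ↔ _
    rw [lineGraph_adj_iff_exists, hadj, hφi.ne_iff]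
    simp [φ]

theorem aux_count {W : Type*} [Fintype W] (r : Setoid W) (𝒮 : Finset (Set W))
    (h𝒮 : ∀ s, s ∈ 𝒮 ↔ ∃ e, s = {f | r e f}) :
    𝒮.card = Fintype.card W - ∑ s ∈ 𝒮, (s.ncard - 1) := by
  classical
  have h1 : Fintype.card W = ∑ s ∈ 𝒮, s.ncard := by
    rw [← Finset.card_univ, Finset.card_eq_sum_card_fiberwise (f := fun e => {f | r e f}) (t := 𝒮)]
    · refine Finset.sum_congr rfl fun s hs => ?_
      obtain ⟨e, rfl⟩ := (h𝒮 s).1 hs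
      rw [← Set.ncard_coe_finset]
      congr 1
      ext f
      simp only [Finset.coe_filter, Finset.mem_univ, true_and, Set.mem_setOf_eq]
      constructor
      · intro h
        have : f ∈ {g | r f g} := r.refl f
        rw [h] at this
        exact this
      · intro h
        ext g
        exact ⟨fun h' => r.trans h h', fun h' => r.trans (r.symm h) h'⟩
    · intro e _
      exact (h𝒮 _).2 ⟨e, rfl⟩
  have h2 : ∑ s ∈ 𝒮, s.ncard = ∑ s ∈ 𝒮, (s.ncard - 1) + 𝒮.card := by
    rw [Finset.card_eq_sum_ones, ← Finset.sum_add_distrib]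
    refine Finset.sum_congr rfl fun s hs => ?_
    obtain ⟨e, rfl⟩ := (h𝒮 s).1 hs
    have : 0 < {f | r e f}.ncard := (Set.ncard_pos (Set.toFinite _)).2 ⟨e, r.refl e⟩
    omega
  omega

/-- a graph on `K*D` vertices satisfying (C1)-(C3) is the line graph of a
`D`-left-regular bipartite graph with `K` left vertices and
`F = K*D - ∑ᵢ (|Sᵢ| - 1)` right vertices, each right vertex having at least one neighbor. -/
theorem caching_line_graph_is_lineGraph_of_bipartite
    {W : Type*} [Fintype W] (K D : ℕ) (hK : 1 ≤ K) (hD : 1 ≤ D)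
    (hcard : Fintype.card W = K * D)
    (L : SimpleGraph W) (U : Fin K → Set W)
    -- (C1)
    (hUclique : ∀ k : Fin K, L.IsClique (U k))
    (hUcard : ∀ k : Fin K, (U k).ncard = D)
    (hUdisj : ∀ k₁ k₂ : Fin K, k₁ ≠ k₂ → Disjoint (U k₁) (U k₂))
    (hUcover : (⋃ k : Fin K, U k) = Set.univ)
    -- (C2)
    (hC2 : ∀ k₁ k₂ : Fin K, k₁ ≠ k₂ → ∀ e ∈ U k₁,
      {f : W | f ∈ U k₂ ∧ L.Adj e f}.Subsingleton)
    -- (C3)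
    (hC3 : ∀ k : Fin K, ∀ e ∈ U k, L.IsClique (insert e (L.neighborSet e \ U k)))
    -- the subfile-cliques
    (𝒮 : Finset (Set W))
    (h𝒮 : (↑𝒮 : Set (Set W)) =
      {s : Set W | ∃ k : Fin K, ∃ e ∈ U k, s = insert e (L.neighborSet e \ U k)}) :
    ∃ B : SimpleGraph (Fin K ⊕ Fin (K * D - ∑ s ∈ 𝒮, (s.ncard - 1))),
      (∀ a b : Fin K, ¬ B.Adj (Sum.inl a) (Sum.inl b)) ∧
      (∀ a b : Fin (K * D - ∑ s ∈ 𝒮, (s.ncard - 1)), ¬ B.Adj (Sum.inr a) (Sum.inr b)) ∧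
      (∀ k : Fin K, (B.neighborSet (Sum.inl k)).ncard = D) ∧
      (∀ f : Fin (K * D - ∑ s ∈ 𝒮, (s.ncard - 1)), (B.neighborSet (Sum.inr f)).Nonempty) ∧
      Nonempty (L ≃g B.lineGraph) := by
  classical
  have hex : ∀ e : W, ∃ k, e ∈ U k := fun e => by
    have : e ∈ ⋃ k, U k := hUcover ▸ Set.mem_univ e
    simpa using this
  choose u hu using hex
  have hmem : ∀ e k, e ∈ U k ↔ u e = k := by
    intro e k
    constructor
    · intro h
      by_contra hne
      exact Set.disjoint_left.1 (hUdisj _ _ hne) (hu e) h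
    · rintro rfl
      exact hu e
  let R : W → W → Prop := fun e f => f = e ∨ (L.Adj e f ∧ u e ≠ u f)
  have hsame : ∀ e f, R e f → u e = u f → e = f := by
    rintro e f (h | h) h'
    · exact h.symm
    · exact absurd h' h.2
  have hRset : ∀ e, insert e (L.neighborSet e \ U (u e)) = {f | R e f} := by
    intro e
    ext f
    simp only [Set.mem_insert_iff, Set.mem_diff, mem_neighborSet, hmem, Set.mem_setOf_eq, R,
      ne_eq, eq_comm (a := u f)]
  have hsymm : ∀ e f, R e f → R f e := by
    rintro e f (h | h)
    · exact Or.inl h.symm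
    · exact Or.inr ⟨h.1.symm, h.2.symm⟩
  have htrans : ∀ e f g, R e f → R f g → R e g := by
    intro e f g h1 h2
    by_cases heg : g = e
    · exact Or.inl heg
    have hcl := hC3 (u f) f (hu f)
    rw [hRset] at hcl
    have hadj : L.Adj e g := hcl (hsymm _ _ h1) h2 (Ne.symm heg)
    refine Or.inr ⟨hadj, fun hue => ?_⟩
    rcases h1 with rfl | h1
    · rcases h2 with rfl | h2
      · exact heg rfl
      · exact h2.2 hue
    · rcases h2 with rfl | h2
      · exact h1.2 hue
      · exact heg (hC2 (u f) (u e) h1.2.symm f (hu f) ⟨(hmem _ _).2 hue.symm, h2.1⟩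
          ⟨hu e, h1.1.symm⟩)
  let r : Setoid W := ⟨R, ⟨fun e => Or.inl rfl, fun {e f} => hsymm e f, fun {e f g} => htrans e f g⟩⟩
  have hmS : ∀ s, s ∈ 𝒮 ↔ ∃ e, s = {f | r e f} := by
    intro s
    rw [← Finset.mem_coe, h𝒮]
    constructor
    · rintro ⟨k, e, he, rfl⟩
      obtain rfl := (hmem _ _).1 he
      exact ⟨e, hRset e⟩
    · rintro ⟨e, rfl⟩
      exact ⟨u e, e, hu e, (hRset e).symm⟩
  have hcnt := aux_count r 𝒮 hmS
  rw [hcard] at hcnt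
  let q := 𝒮.equivFinOfCardEq hcnt
  have hqR : ∀ e f, q ⟨_, (hmS _).2 ⟨e, rfl⟩⟩ = q ⟨_, (hmS _).2 ⟨f, rfl⟩⟩ ↔ R e f := by
    intro e f
    rw [q.injective.eq_iff, Subtype.mk.injEq]
    constructor
    · intro h
      have : f ∈ {g | r f g} := r.refl f
      rw [← h] at this
      exact this
    · intro h
      ext g
      exact ⟨fun h' => htrans _ _ _ (hsymm _ _ h) h', fun h' => htrans _ _ _ h h'⟩
  refine aux_build L u (fun e => q ⟨_, (hmS _).2 ⟨e, rfl⟩⟩) ?_ ?_ ?_ D ?_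
  · intro x
    obtain ⟨⟨s, hs⟩, rfl⟩ := q.surjective x
    obtain ⟨e, rfl⟩ := (hmS s).1 hs
    exact ⟨e, rfl⟩
  · intro e f h1 h2
    exact hsame e f ((hqR e f).1 h2) h1
  · intro e f
    simp only [hqR]
    constructor
    · intro h
      refine ⟨h.ne, ?_⟩
      by_cases h' : u e = u f
      · exact Or.inl h'
      · exact Or.inr (Or.inr ⟨h, h'⟩)
    · rintro ⟨hne, h | h | h⟩
      · exact hUclique (u e) (hu e) ((hmem _ _).2 h.symm) hne
      · exact absurd h.symm hne
      · exact h.1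
  · intro k
    rw [← hUcard k]
    congr 1
    ext e
    exact (hmem e k).symm
end

section
/- Let q be a prime power, m, t ≥ 1, and let X be an (m+t)-dimensional vector space over F_q. Then there exists a bijection σ from the set of t-dimensional subspaces of X onto the set of m-dimensional subspaces of X such that V ⊕ σ(V) = X for every t-dimensional subspace V of X. -/
lemma card_complements_aux
    (Fq : Type*) [Field Fq] [Fintype Fq]
    (X : Type*) [AddCommGroup X] [Module Fq X] [FiniteDimensional Fq X]
    (m t : ℕ) (hX : Module.finrank Fq X = m + t)
    (p : Submodule Fq X) (hp : Module.finrank Fq p = t) :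
    Nat.card {q : Submodule Fq X // IsCompl p q} = Fintype.card Fq ^ (m * t) := by
  classical
  rw [Nat.card_congr (Submodule.isComplEquivProj p)]
  obtain ⟨f0, hf0⟩ := p.subtype.exists_leftInverse_of_injective (by simp)
  have h0 : ∀ x : p, f0 x = x := fun x => by
    simpa using LinearMap.congr_fun hf0 x
  let e : {f : X →ₗ[Fq] p // ∀ x : p, f x = x} ≃ (X ⧸ p →ₗ[Fq] p) :=
    { toFun := fun f => p.liftQ (f.1 - f0) (by
        intro x hx
        have h1 := f.2 ⟨x, hx⟩
        have h2 := h0 ⟨x, hx⟩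
        simp only at h1 h2
        simp [h1, h2])
      invFun := fun g => ⟨f0 + g.comp p.mkQ, by
        intro x
        have hx : (Submodule.Quotient.mk (x : X) : X ⧸ p) = 0 :=
          (Submodule.Quotient.mk_eq_zero p).2 x.2
        simp [h0 x, hx]⟩
      left_inv := by
        intro f
        ext x
        simp
      right_inv := by
        intro g
        ext x
        simp }
  rw [Nat.card_congr e]
  have hq : Module.finrank Fq (X ⧸ p) = m := by
    have := p.finrank_quotient_add_finrank
    omega
  rw [Module.natCard_eq_pow_finrank (K := Fq), Module.finrank_linearMap, hq, hp,
    Nat.card_eq_fintype_card]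

/-- for an `(m+t)`-dimensional space `X` over a finite field, there is a
bijection `σ` from the `t`-dimensional subspaces of `X` onto the `m`-dimensional subspaces
of `X` such that `V ⊕ σ(V) = X` for every `t`-dimensional subspace `V`. -/
theorem exists_matching_complement_bijection
    (Fq : Type*) [Field Fq] [Fintype Fq]
    (X : Type*) [AddCommGroup X] [Module Fq X] [FiniteDimensional Fq X]
    (m t : ℕ) (hm : 1 ≤ m) (ht : 1 ≤ t) (hX : Module.finrank Fq X = m + t) :
    ∃ σ : {V : Submodule Fq X // Module.finrank Fq V = t} ≃
          {T : Submodule Fq X // Module.finrank Fq T = m},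
      ∀ V : {V : Submodule Fq X // Module.finrank Fq V = t},
        (V : Submodule Fq X) ⊓ (σ V : Submodule Fq X) = ⊥ ∧
        (V : Submodule Fq X) ⊔ (σ V : Submodule Fq X) = ⊤ := by
  classical
  haveI : Finite X := Module.finite_of_finite Fq
  haveI : Finite (Submodule Fq X) := Finite.of_injective (fun p => (p : Set X)) SetLike.coe_injective
  let L := {V : Submodule Fq X // Module.finrank Fq V = t}
  let R := {T : Submodule Fq X // Module.finrank Fq T = m}
  letI : Fintype L := Fintype.ofFinite _
  letI : Fintype R := Fintype.ofFinite _
  let r : L → R → Prop := fun V T => IsCompl V.1 T.1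
  set d := Fintype.card Fq ^ (m * t) with hd
  have hdpos : 0 < d := pow_pos Fintype.card_pos _
  have hA : ∀ V : L, (Finset.univ.filter (fun T : R => r V T)).card = d := by
    intro V
    rw [hd, ← card_complements_aux Fq X m t hX V.1 V.2, ← Fintype.card_subtype,
      ← Nat.card_eq_fintype_card]
    refine Nat.card_congr ⟨fun T => ⟨T.1.1, T.2⟩, fun q => ⟨⟨q.1, ?_⟩, q.2⟩, fun _ => rfl, fun _ => rfl⟩
    have := Submodule.finrank_add_eq_of_isCompl q.2
    have := V.2
    omega
  have hB : ∀ T : R, (Finset.univ.filter (fun V : L => r V T)).card = d := by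
    intro T
    rw [hd, mul_comm, ← card_complements_aux Fq X t m (by omega) T.1 T.2, ← Fintype.card_subtype,
      ← Nat.card_eq_fintype_card]
    refine Nat.card_congr ⟨fun V => ⟨V.1.1, V.2.symm⟩, fun q => ⟨⟨q.1, ?_⟩, q.2.symm⟩,
      fun _ => rfl, fun _ => rfl⟩
    have := Submodule.finrank_add_eq_of_isCompl q.2
    have := T.2
    omega
  have hcard : Fintype.card L = Fintype.card R := by
    have := Finset.card_mul_eq_card_mul (s := (Finset.univ : Finset L))
      (t := (Finset.univ : Finset R)) r (m := d) (n := d)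
      (fun V _ => hA V) (fun T _ => hB T)
    exact Nat.eq_of_mul_eq_mul_right hdpos this
  obtain ⟨f, hf, hfr⟩ := (Finset.all_card_le_biUnion_card_iff_exists_injective
      (fun V : L => Finset.univ.filter (fun T : R => r V T))).1 (by
    intro s
    have := Finset.card_mul_le_card_mul (s := s)
      (t := s.biUnion (fun V : L => Finset.univ.filter (fun T : R => r V T))) r (m := d) (n := d)
      (fun V hV => by
        rw [← hA V]
        apply Finset.card_le_card
        intro T hT
        rw [Finset.mem_bipartiteAbove]
        exact ⟨Finset.mem_biUnion.2 ⟨V, hV, hT⟩, (Finset.mem_filter.1 hT).2⟩)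
      (fun T _ => by
        rw [← hB T]
        apply Finset.card_le_card
        intro V hV
        rw [Finset.mem_bipartiteBelow] at hV
        simpa using hV.2)
    exact Nat.le_of_mul_le_mul_right this hdpos)
  refine ⟨Equiv.ofBijective f ((Fintype.bijective_iff_injective_and_card f).2 ⟨hf, hcard⟩), ?_⟩
  intro V
  have h : IsCompl V.1 (f V).1 := (Finset.mem_filter.1 (hfr V)).2
  exact ⟨h.inf_eq_bot, h.sup_eq_top⟩
end

section
/- Let q ≥ 2 be a prime power and a, b, f integers with 1 ≤ b ≤ f ≤ a. Then q^{(a−f−1)b} ≤ [a choose b]_q / [f choose b]_q ≤ q^{(a−f+1)b}. -/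
/-- The Gaussian binomial coefficient `[a choose b]_q`, as a rational number:
`∏_{i=0}^{b-1} (q^{a-i} - 1)/(q^{b-i} - 1)`. -/
def gaussBinomQ (q a b : ℕ) : ℚ :=
  ∏ i ∈ Finset.range b, (((q : ℚ) ^ (a - i) - 1) / ((q : ℚ) ^ (b - i) - 1))

/-- for a prime power `q ≥ 2` and `1 ≤ b ≤ f ≤ a`,
`q^{(a−f−1)b} ≤ [a choose b]_q / [f choose b]_q ≤ q^{(a−f+1)b}`. -/
theorem gauss_binomial_ratio_bounds (q a b f : ℕ) (hq2 : 2 ≤ q) (hq : IsPrimePow q)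
    (hb : 1 ≤ b) (hbf : b ≤ f) (hfa : f ≤ a) :
    (q : ℚ) ^ ((((a : ℤ) - f) - 1) * b) ≤ gaussBinomQ q a b / gaussBinomQ q f b ∧
      gaussBinomQ q a b / gaussBinomQ q f b ≤ (q : ℚ) ^ ((((a : ℤ) - f) + 1) * b) := by
  have hq1 : (2 : ℚ) ≤ q := by exact_mod_cast hq2
  have hq0 : (0 : ℚ) < q := by linarith
  have hpos : ∀ m : ℕ, 1 ≤ m → (0 : ℚ) < (q : ℚ) ^ m - 1 := by
    intro m hm
    have := one_lt_pow₀ (show (1 : ℚ) < q by linarith) (show m ≠ 0 by omega)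
    linarith
  have hratio : gaussBinomQ q a b / gaussBinomQ q f b =
      ∏ i ∈ Finset.range b, (((q : ℚ) ^ (a - i) - 1) / ((q : ℚ) ^ (f - i) - 1)) := by
    unfold gaussBinomQ
    rw [← Finset.prod_div_distrib]
    refine Finset.prod_congr rfl fun i hi => ?_
    have hi' := Finset.mem_range.mp hi
    have h1 := (hpos (b - i) (by omega)).ne'
    have h2 := (hpos (f - i) (by omega)).ne'
    field_simp
  have hconst : ∀ e : ℤ, (q : ℚ) ^ (e * b) = ∏ _i ∈ Finset.range b, (q : ℚ) ^ e := by
    intro e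
    rw [Finset.prod_const, Finset.card_range, zpow_mul, zpow_natCast]
  obtain ⟨d, rfl⟩ := Nat.exists_eq_add_of_le hfa
  have hd1 : (1 : ℚ) ≤ (q : ℚ) ^ d := one_le_pow₀ (by linarith)
  have he : ((f + d : ℕ) : ℤ) - f = d := by push_cast; ring
  rw [hratio, hconst, hconst, he]
  constructor
  · refine Finset.prod_le_prod (fun i _ => (zpow_pos hq0 _).le) fun i hi => ?_
    have hi' := Finset.mem_range.mp hi
    have h2 := hpos (f - i) (by omega)
    have h3 : (q : ℚ) ^ ((d : ℤ) - 1) ≤ (q : ℚ) ^ d := by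
      rw [← zpow_natCast]
      exact zpow_le_zpow_right₀ (by linarith) (by omega)
    refine h3.trans ?_
    rw [le_div_iff₀ h2, show f + d - i = d + (f - i) by omega, pow_add]
    linarith
  · refine Finset.prod_le_prod (fun i hi => ?_) fun i hi => ?_
    · have hi' := Finset.mem_range.mp hi
      exact (div_pos (hpos _ (by omega)) (hpos _ (by omega))).le
    have hi' := Finset.mem_range.mp hi
    have h2 := hpos (f - i) (by omega)
    have h4 : (q : ℚ) ≤ (q : ℚ) ^ (f - i) := le_self_pow₀ (by linarith) (by omega)
    rw [div_le_iff₀ h2, show f + d - i = d + (f - i) by omega, pow_add,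
      zpow_add_one₀ hq0.ne', zpow_natCast]
    generalize (q : ℚ) ^ (f - i) = x at *
    have h5 : 0 ≤ x * (q - 1) - q := by nlinarith
    nlinarith [mul_nonneg (show (0 : ℚ) ≤ (q : ℚ) ^ d by linarith) h5]
end
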